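/- Let Σ_A(ℕ) be a topologically mixing, finitely primitive (BIP) countable Markov shift, f : Σ_A(ℕ) → ℝ satisfying the Walters condition with Var_1 f < ∞ and P(f) < ∞, and for β ≥ 1 let h_β be the Ruelle eigenfunction of L_{βf}. Then the family of functions V_β := (1/β) log h_β, β ≥ 1, is uniformly bounded and equicontinuous; in particular there is a sequence β_i → ∞ such that V_{β_i} converges uniformly on every compact subset of Σ_A(ℕ). -/

import Mathlib

open Filter Topology MeasureTheory
open scoped ENNReal

/-- The countable Markov shift over alphabet ℕ determined by the 0-1 matrix `A`. -/
def MarkovShift (A : ℕ → ℕ → Bool) : Type :=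
  {x : ℕ → ℕ // ∀ i, A (x i) (x (i + 1)) = true}

namespace MarkovShift

variable {A : ℕ → ℕ → Bool}

instance : TopologicalSpace (MarkovShift A) :=
  instTopologicalSpaceSubtype

instance : MeasurableSpace (MarkovShift A) := borel _

instance : BorelSpace (MarkovShift A) := ⟨rfl⟩

/-- The shift map. -/
def shift (x : MarkovShift A) : MarkovShift A :=
  ⟨fun n => x.1 (n + 1), fun i => x.2 (i + 1)⟩

/-- The cylinder set determined by a finite word. -/
def cylinder (w : List ℕ) : Set (MarkovShift A) :=
  {x | ∀ i : Fin w.length, x.1 i = w.get i}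

/-- The cylinder set determined by the first `m` coordinates of `x`. -/
def cylOf (x : MarkovShift A) (m : ℕ) : Set (MarkovShift A) :=
  {y | ∀ i < m, y.1 i = x.1 i}

/-- A symbol is admissible when its cylinder is nonempty. -/
def Admissible (A : ℕ → ℕ → Bool) (a : ℕ) : Prop :=
  ∃ x : MarkovShift A, x.1 0 = a

/-- Topologically mixing. -/
def TopologicallyMixing (A : ℕ → ℕ → Bool) : Prop :=
  ∀ a b : ℕ, Admissible A a → Admissible A b →
    ∃ N : ℕ, ∀ n ≥ N, ∃ x : MarkovShift A, x.1 0 = a ∧ (shift^[n] x).1 0 = b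

/-- Finitely primitive (BIP). -/
def FinitelyPrimitive (A : ℕ → ℕ → Bool) : Prop :=
  ∃ (K₀ : ℕ) (F : Finset ℕ), ∀ a b : ℕ, Admissible A a → Admissible A b →
    ∃ w : List ℕ, w.length = K₀ ∧ (∀ c ∈ w, c ∈ F) ∧
      List.Chain' (fun u v => A u v = true) (a :: (w ++ [b]))

/-- First coordinate where two distinct points disagree. -/
noncomputable def firstDiff (x y : MarkovShift A) (h : x ≠ y) : ℕ :=
  Nat.find (Function.ne_iff.mp (fun hxy : x.1 = y.1 => h (Subtype.ext hxy)))

open Classical in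
/-- The metric `d(x,y) = r^{t(x,y)}`. -/
noncomputable def dist' (r : ℝ) (x y : MarkovShift A) : ℝ :=
  if h : x = y then 0 else r ^ firstDiff x y h

/-- Birkhoff sum `S_n f`. -/
def birkhoff (f : MarkovShift A → ℝ) (n : ℕ) (x : MarkovShift A) : ℝ :=
  ∑ j ∈ Finset.range n, f (shift^[j] x)

/-- The set of values `|S_n f x - S_n f y|` over pairs agreeing on the first `m` coordinates. -/
def varSet (f : MarkovShift A → ℝ) (n m : ℕ) : Set ℝ :=
  {c | ∃ x y : MarkovShift A, (∀ i < m, x.1 i = y.1 i) ∧ c = |birkhoff f n x - birkhoff f n y|}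

/-- `Var_m (S_n f)`. -/
noncomputable def varBirk (f : MarkovShift A → ℝ) (n m : ℕ) : ℝ := sSup (varSet f n m)

/-- `Var_1 f < ∞`. -/
def Var1Finite (f : MarkovShift A → ℝ) : Prop := BddAbove (varSet f 1 1)

/-- The set whose supremum is `sup_{n ≥ 1} Var_{n+k}(S_n f)`. -/
def waltersSet (f : MarkovShift A → ℝ) (k : ℕ) : Set ℝ :=
  {c | ∃ n, 1 ≤ n ∧ c ∈ varSet f n (n + k)}

/-- `M_k = sup_{n ≥ 1} Var_{n+k}(S_n f)`. -/
noncomputable def waltersSup (f : MarkovShift A → ℝ) (k : ℕ) : ℝ := sSup (waltersSet f k)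

/-- The Walters condition. -/
def SatisfiesWalters (f : MarkovShift A → ℝ) : Prop :=
  (∀ k, 1 ≤ k → BddAbove (waltersSet f k)) ∧
    Tendsto (fun k => waltersSup f k) atTop (𝓝 0)

/-- The partition function `Z_n(f,a) = Σ_{σ^n x = x, x₀ = a} e^{S_n f (x)}`. -/
noncomputable def partitionSum (f : MarkovShift A → ℝ) (n : ℕ) (a : ℕ) : ℝ :=
  ∑' x : {x : MarkovShift A // shift^[n] x = x ∧ x.1 0 = a}, Real.exp (birkhoff f n x.1)

/-- `f` has (finite) Gurevich pressure `p`. -/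
def HasGurevichPressure (f : MarkovShift A → ℝ) (p : ℝ) : Prop :=
  ∀ a : ℕ, Admissible A a →
    (∀ n, 1 ≤ n → Summable fun x : {x : MarkovShift A // shift^[n] x = x ∧ x.1 0 = a} =>
        Real.exp (birkhoff f n x.1)) ∧
    Tendsto (fun n : ℕ => (1 / (n : ℝ)) * Real.log (partitionSum f n a)) atTop (𝓝 p)

/-- σ-invariant Borel probability measure. -/
def IsInvariantProb (μ : Measure (MarkovShift A)) : Prop :=
  IsProbabilityMeasure μ ∧ μ.map shift = μ

/-- `m(f)`, the maximal ergodic average. -/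
noncomputable def mf (f : MarkovShift A → ℝ) : ℝ :=
  sSup {c | ∃ μ : Measure (MarkovShift A),
    IsInvariantProb μ ∧ Integrable f μ ∧ ∫ x, f x ∂μ = c}

/-- A maximizing measure for `f`. -/
def IsMaximizing (f : MarkovShift A → ℝ) (μ : Measure (MarkovShift A)) : Prop :=
  IsInvariantProb μ ∧ Integrable f μ ∧ ∫ x, f x ∂μ = mf f

/-- Bounded real valued function. -/
def BoundedFun (g : MarkovShift A → ℝ) : Prop := ∃ C, ∀ x, |g x| ≤ C

/-- A bounded calibrated sub-action for `f`. -/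
def IsCalibratedSubaction (f V : MarkovShift A → ℝ) : Prop :=
  Continuous V ∧ BoundedFun V ∧
    (∀ x, f x + V x - V (shift x) - mf f ≤ 0) ∧
    (∀ y, ∃ x, shift x = y ∧ f x + V x - V (shift x) - mf f = 0)

/-- The Ruelle transfer operator `(L_g u)(x) = Σ_{σ y = x} e^{g(y)} u(y)`. -/
noncomputable def ruelle (g u : MarkovShift A → ℝ) (x : MarkovShift A) : ℝ :=
  ∑' y : {y : MarkovShift A // shift y = x}, Real.exp (g y.1) * u y.1

/-- Ruelle-Perron-Frobenius data for the potential `f` with pressure `p`: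
eigenfunction `h`, eigenmeasure `ν`. -/
def IsRPF (f : MarkovShift A → ℝ) (p : ℝ) (h : MarkovShift A → ℝ)
    (ν : Measure (MarkovShift A)) : Prop :=
  Continuous h ∧ (∀ x, 0 < h x) ∧
    (∀ x, ruelle f h x = Real.exp p * h x) ∧
    IsProbabilityMeasure ν ∧
    (∀ g : MarkovShift A → ℝ, Continuous g → BoundedFun g →
      ∫ x, ruelle f g x ∂ν = Real.exp p * ∫ x, g x ∂ν) ∧
    ∫ x, h x ∂ν = 1

/-- The Gibbs measure `dμ = h dν`. -/
noncomputable def gibbs (h : MarkovShift A → ℝ) (ν : Measure (MarkovShift A)) :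
    Measure (MarkovShift A) :=
  ν.withDensity fun x => ENNReal.ofReal (h x)

/-- The Mañé potential `S_f(x,y)` (with respect to the metric of parameter `r`). -/
noncomputable def manePot (r : ℝ) (f : MarkovShift A → ℝ) (x y : MarkovShift A) : EReal :=
  ⨅ ε : {ε : ℝ // 0 < ε}, ⨆ n : {n : ℕ // 1 ≤ n},
    ⨆ _z : {z : MarkovShift A // dist' r x z < ε.1 ∧ shift^[n.1] z = y},
      ((birkhoff (fun w => f w - mf f) n.1 _z.1 : ℝ) : EReal)

/-- The (topological) support of a measure. -/
def msupport (μ : Measure (MarkovShift A)) : Set (MarkovShift A) :=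
  {x | ∀ U : Set (MarkovShift A), IsOpen U → x ∈ U → 0 < μ U}

end MarkovShift

/-!
Where the series defining `L_g` is allowed to take the value `∞`, it turns the Walters condition
into a distortion bound: if `u` depends on finitely many coordinates and `n` is large, then
`L_gⁿ u (x) ≤ exp (M_m) L_gⁿ u (y)` for `x`, `y` agreeing on `m` coordinates. An eigenfunction `h`
need not be a limit of iterates of a single such `u`, but the supremum over `k` of the functions
`e^{-kp} L_gᵏ u_k`, with `u_k ≤ h` the best minorant depending on `k` coordinates, satisfies the
same bound, lies below `h`, and by duality has at least the `ν`-integral of `h`. It therefore equals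
`h` almost everywhere; as `ν` has full support, continuity transfers the bound to `h`. For
`g = β f` the constant is `exp (β M_m)`, so `β⁻¹ log h_β` has modulus of continuity `M_m` for every
`β`.

For the uniform bound, finite primitivity joins each symbol to each point in `K + 1` steps at
bounded cost, which compares the values of `h_β` at any two points up to a factor
`exp (β (C + M_1 + K D))`, while `∫ h_β dν_β = 1` fixes the scale. Here `exp (β D)` bounds
`L_{βf} 1`: closing up the joining words embeds a fiber of the shift into the periodic points
counted by a partition function of `f`, which is finite, and `∑ t^β ≤ (∑ t)^β`.
-/

theorem ennreal_tsum_rpow_le_rpow_tsum {ι : Type*} (t : ι → ℝ≥0∞) {β : ℝ} (hβ : 1 ≤ β) :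
    ∑' i, t i ^ β ≤ (∑' i, t i) ^ β := by
  have hsplit (a : ℝ≥0∞) : a ^ β = a * a ^ (β - 1) := by
    nth_rewrite 2 [← ENNReal.rpow_one a]
    rw [← ENNReal.rpow_add_of_nonneg _ _ zero_le_one (sub_nonneg.2 hβ), add_sub_cancel]
  simp only [hsplit]
  rw [← ENNReal.tsum_mul_right]
  exact ENNReal.tsum_le_tsum fun i =>
    mul_le_mul_right (ENNReal.rpow_le_rpow (ENNReal.le_tsum i) (sub_nonneg.2 hβ)) (t i)

theorem cauchySeq_of_equicontinuous_of_dense {X α : Type*} [TopologicalSpace X] [UniformSpace α]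
    {F : ℕ → X → α} (hF : Equicontinuous F) {s : Set X} (hs : Dense s)
    (hFs : ∀ d ∈ s, CauchySeq fun i => F i d) (x : X) : CauchySeq fun i => F i x := by
  refine cauchySeq_iff.2 fun U hU => ?_
  obtain ⟨W, hW, hWsymm, hWU⟩ := comp_comp_symm_mem_uniformity_sets hU
  obtain ⟨d, hds, hd⟩ := hs.inter_nhds_nonempty (hF x W hW)
  obtain ⟨N, hN⟩ := cauchySeq_iff.1 (hFs d hds) W hW
  exact ⟨N, fun k hk l hl => hWU ⟨F l d, ⟨F k d, hd k, hN k hk l hl⟩, hWsymm.symm _ _ (hd l)⟩⟩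

theorem tendstoUniformlyOn_of_equicontinuous {ι X α : Type*} [TopologicalSpace X] [UniformSpace α]
    {F : ι → X → α} (hF : Equicontinuous F) {l : Filter ι} {V : X → α}
    (hV : ∀ x, Tendsto (fun i => F i x) l (𝓝 (V x))) {K : Set X} (hK : IsCompact K) :
    TendstoUniformlyOn F V l K := by
  have hrestrict := (EquicontinuousOn.tendsto_uniformOnFun_iff_pi' (𝔖 := {K}) (by simpa)
    (fun _ _ => hF.equicontinuousOn _) l V).2 (tendsto_pi_nhds.2 fun x => hV x)
  exact UniformOnFun.tendsto_iff_tendstoUniformlyOn.1 hrestrict K rfl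

theorem exists_subseq_tendstoUniformlyOn_isCompact {X α : Type*} [TopologicalSpace X]
    [TopologicalSpace.SeparableSpace X] [UniformSpace α] [(uniformity α).IsCountablyGenerated]
    {F : ℕ → X → α} (hF : Equicontinuous F) {Q : X → Set α} (hQ : ∀ x, IsCompact (Q x))
    (hFQ : ∀ i x, F i x ∈ Q x) : ∃ (φ : ℕ → ℕ) (V : X → α), StrictMono φ ∧
      ∀ K, IsCompact K → TendstoUniformlyOn (fun i => F (φ i)) V atTop K := by
  obtain ⟨s, hs, hdense⟩ := TopologicalSpace.exists_countable_dense X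
  have := hs.to_subtype
  obtain ⟨v, -, φ, hφ, hv⟩ := (isCompact_univ_pi fun d : s => hQ d).tendsto_subseq
    (x := fun i (d : s) => F i d) fun i d _ => hFQ i d
  have hFφ : Equicontinuous fun i => F (φ i) := hF.comp φ
  have hcauchy := cauchySeq_of_equicontinuous_of_dense hFφ hdense fun d hd =>
    (tendsto_pi_nhds.1 hv ⟨d, hd⟩).cauchySeq
  choose V _ hV using fun x => cauchySeq_tendsto_of_isComplete (hQ x).isComplete
    (fun i => hFQ (φ i) x) (hcauchy x)
  exact ⟨φ, V, hφ, fun K hK => tendstoUniformlyOn_of_equicontinuous hFφ hV hK⟩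

theorem abs_inv_mul_log_sub_le {β a b w : ℝ} (hβ : 0 < β) (ha : 0 < a) (hb : 0 < b)
    (hab : a ≤ Real.exp (β * w) * b) (hba : b ≤ Real.exp (β * w) * a) :
    |(1 / β) * Real.log a - (1 / β) * Real.log b| ≤ w := by
  have hlog {s t : ℝ} (hs : 0 < s) (ht : 0 < t) (hst : s ≤ Real.exp (β * w) * t) :
      Real.log s ≤ β * w + Real.log t := by
    simpa only [Real.log_mul (Real.exp_ne_zero _) ht.ne', Real.log_exp] using Real.log_le_log hs hst
  have hle : |Real.log a - Real.log b| ≤ β * w :=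
    abs_sub_le_iff.2 ⟨sub_le_iff_le_add.2 (hlog ha hb hab), sub_le_iff_le_add.2 (hlog hb ha hba)⟩
  rwa [← mul_sub, abs_mul, abs_of_pos (one_div_pos.2 hβ), one_div, inv_mul_le_iff₀ hβ]

namespace MarkovShift

section

variable {A : ℕ → ℕ → Bool}

/-! ### Points, inverse branches and cylinders -/

theorem shift_iterate_apply (n : ℕ) (x : MarkovShift A) (i : ℕ) :
    (shift^[n] x).1 i = x.1 (i + n) := by
  induction n generalizing x with
  | zero => rfl
  | succ n ih => rw [Function.iterate_succ_apply, ih, ← add_assoc]; rfl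

theorem admissible_coord (x : MarkovShift A) (i : ℕ) : Admissible A (x.1 i) :=
  ⟨shift^[i] x, by rw [shift_iterate_apply, zero_add]⟩

/-- The inverse branch `x ↦ a x₀ x₁ …` of the shift. -/
def cons (a : ℕ) (x : MarkovShift A) (h : A a (x.1 0) = true) : MarkovShift A :=
  ⟨fun | 0 => a | i + 1 => x.1 i, fun | 0 => h | i + 1 => x.2 i⟩

theorem shift_cons (a : ℕ) (x : MarkovShift A) (h : A a (x.1 0) = true) :
    shift (cons a x h) = x :=
  rfl

theorem mem_cylOf_self (x : MarkovShift A) (m : ℕ) : x ∈ cylOf x m :=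
  fun _ _ => rfl

theorem mem_cylOf_comm {x y : MarkovShift A} {m : ℕ} : x ∈ cylOf y m ↔ y ∈ cylOf x m :=
  forall₂_congr fun _ _ => eq_comm

theorem cylOf_eq_of_mem {x y : MarkovShift A} {m : ℕ} (h : x ∈ cylOf y m) :
    cylOf x m = cylOf y m :=
  Set.ext fun _ => forall₂_congr fun i hi => by rw [h i hi]

theorem cylOf_subset_cylOf (x : MarkovShift A) {m n : ℕ} (h : m ≤ n) : cylOf x n ⊆ cylOf x m :=
  fun _ hy i hi => hy i (hi.trans_le h)

theorem mem_cylOf_add {x y : MarkovShift A} {n m : ℕ} (hn : x ∈ cylOf y n)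
    (hm : shift^[n] x ∈ cylOf (shift^[n] y) m) : x ∈ cylOf y (n + m) := by
  intro i hi
  rcases lt_or_ge i n with h | h
  · exact hn i h
  · simpa only [shift_iterate_apply, Nat.sub_add_cancel h] using hm (i - n) (by omega)

theorem eq_of_mem_cylOf_of_iterate_shift_eq {x y : MarkovShift A} {n : ℕ} (hn : x ∈ cylOf y n)
    (h : shift^[n] x = shift^[n] y) : x = y :=
  Subtype.ext <| funext fun i =>
    mem_cylOf_add (m := i + 1) hn (h ▸ mem_cylOf_self _ _) i (by omega)

theorem eq_of_coord_zero_eq_of_shift_eq {x y : MarkovShift A} (h₀ : x.1 0 = y.1 0)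
    (h : shift x = shift y) : x = y :=
  eq_of_mem_cylOf_of_iterate_shift_eq (n := 1) (fun i hi => by rwa [Nat.lt_one_iff.1 hi]) h

theorem injective_coord_zero_fiber (x : MarkovShift A) :
    Function.Injective fun y : {y : MarkovShift A // shift y = x} => y.1.1 0 :=
  fun y y' h => Subtype.ext (eq_of_coord_zero_eq_of_shift_eq h (y.2.trans y'.2.symm))

theorem exists_mem_cylOf_iterate_shift_eq (x y : MarkovShift A) (n : ℕ) (h : x.1 n = y.1 0) :
    ∃ z ∈ cylOf x (n + 1), shift^[n] z = y := by
  induction n generalizing x with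
  | zero => exact ⟨y, fun i hi => by rw [Nat.lt_one_iff.1 hi, h], rfl⟩
  | succ n ih =>
    obtain ⟨z, hz, rfl⟩ := ih (shift x) h
    refine ⟨cons (x.1 0) z (by rw [hz 0 n.succ_pos]; exact x.2 0), fun i hi => ?_, rfl⟩
    cases i with
    | zero => rfl
    | succ i => exact hz i (by omega)

theorem exists_mem_cylOf_iterate_shift_eq_self (x : MarkovShift A) {n : ℕ} (hn : 0 < n)
    (h : x.1 n = x.1 0) : ∃ z ∈ cylOf x (n + 1), shift^[n] z = z := by
  have hstep (i : ℕ) : A (x.1 (i % n)) (x.1 ((i + 1) % n)) = true := by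
    rw [Nat.add_mod_eq_add_mod_right 1 (Nat.mod_mod i n).symm]
    rcases (Nat.succ_le_of_lt (Nat.mod_lt i hn)).lt_or_eq with hlt | heq
    · rw [Nat.mod_eq_of_lt hlt]; exact x.2 _
    · have := x.2 (i % n)
      rw [← Nat.succ_eq_add_one, heq] at this ⊢
      rwa [Nat.mod_self, ← h]
  refine ⟨⟨fun i => x.1 (i % n), hstep⟩, fun i hi => ?_, ?_⟩
  · rcases (Nat.le_of_lt_succ hi).lt_or_eq with hlt | rfl
    · exact congrArg x.1 (Nat.mod_eq_of_lt hlt)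
    · simp only [Nat.mod_self, h]
  · exact Subtype.ext <| funext fun i =>
      (shift_iterate_apply n _ i).trans (congrArg x.1 (Nat.add_mod_right i n))

theorem exists_iterate_shift_eq_of_isChain (w : List ℕ) (a : ℕ) (y : MarkovShift A)
    (hw : List.IsChain (fun u v => A u v = true) (a :: (w ++ [y.1 0]))) :
    ∃ z : MarkovShift A, shift^[w.length + 1] z = y ∧ z.1 0 = a ∧
      ∀ i < w.length, z.1 (i + 1) ∈ w := by
  induction w generalizing a with
  | nil => exact ⟨cons a y (by simpa using hw), rfl, rfl, by simp⟩
  | cons b w ih =>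
    rw [List.cons_append, List.isChain_cons_cons] at hw
    obtain ⟨z, rfl, hzb, hzw⟩ := ih b hw.2
    refine ⟨cons a z (hzb ▸ hw.1), rfl, rfl, fun i hi => ?_⟩
    cases i with
    | zero => exact hzb ▸ List.mem_cons_self
    | succ i => exact List.mem_cons_of_mem _ (hzw i (by simpa using hi))

theorem FinitelyPrimitive.exists_preimage (hA : FinitelyPrimitive A) :
    ∃ (K : ℕ) (F : Finset ℕ), ∀ (a : ℕ) (_ : Admissible A a) (y : MarkovShift A),
      ∃ z, shift^[K + 1] z = y ∧ z.1 0 = a ∧ ∀ i < K, z.1 (i + 1) ∈ F := by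
  obtain ⟨K, F, hF⟩ := hA
  refine ⟨K, F, fun a ha y => ?_⟩
  obtain ⟨w, rfl, hwF, hw⟩ := hF a (y.1 0) ha (admissible_coord y 0)
  obtain ⟨z, hzy, hza, hzw⟩ := exists_iterate_shift_eq_of_isChain w a y hw
  exact ⟨z, hzy, hza, fun i hi => hwF _ (hzw i hi)⟩

theorem isOpen_cylOf (x : MarkovShift A) (m : ℕ) : IsOpen (cylOf x m) :=
  (PiNat.isOpen_cylinder _ x.1 m).preimage continuous_subtype_val

theorem cylOf_mem_nhds (x : MarkovShift A) (m : ℕ) : cylOf x m ∈ 𝓝 x :=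
  (isOpen_cylOf x m).mem_nhds (mem_cylOf_self x m)

theorem exists_cylOf_subset {U : Set (MarkovShift A)} (hU : IsOpen U) {x : MarkovShift A}
    (hx : x ∈ U) : ∃ m, cylOf x m ⊆ U := by
  obtain ⟨W, hW, rfl⟩ := isOpen_induced_iff.1 hU
  obtain ⟨_, ⟨y, m, rfl⟩, hxy, hsub⟩ :=
    (PiNat.isTopologicalBasis_cylinders _).exists_subset_of_mem_open hx hW
  exact ⟨m, fun z hz => hsub (PiNat.mem_cylinder_iff_eq.1 hxy ▸ hz)⟩

theorem FinitelyPrimitive.exists_iterate_shift_image_eq_univ (hA : FinitelyPrimitive A)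
    {U : Set (MarkovShift A)} (hU : IsOpen U) (hne : U.Nonempty) :
    ∃ n, shift^[n] '' U = Set.univ := by
  obtain ⟨x, hx⟩ := hne
  obtain ⟨m, hm⟩ := exists_cylOf_subset hU hx
  obtain ⟨K, F, hK⟩ := hA.exists_preimage
  refine ⟨K + 1 + m, Set.eq_univ_of_forall fun y => ?_⟩
  obtain ⟨y', rfl, hy', -⟩ := hK _ (admissible_coord x m) y
  obtain ⟨z, hz, rfl⟩ := exists_mem_cylOf_iterate_shift_eq x y' m hy'.symm
  exact ⟨z, hm (cylOf_subset_cylOf x m.le_succ hz), Function.iterate_add_apply ..⟩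

theorem isInducing_val : IsInducing (Subtype.val : MarkovShift A → ℕ → ℕ) :=
  IsInducing.subtypeVal

instance : TopologicalSpace.PseudoMetrizableSpace (MarkovShift A) :=
  isInducing_val.pseudoMetrizableSpace

instance : SecondCountableTopology (MarkovShift A) :=
  isInducing_val.secondCountableTopology

theorem mem_cylOf_of_dist'_lt {r : ℝ} (hr0 : 0 < r) (hr1 : r < 1) {m : ℕ} {x y : MarkovShift A}
    (h : dist' r x y < r ^ m) : x ∈ cylOf y m := by
  intro i hi
  by_contra hne
  have hxy : x ≠ y := by rintro rfl; exact hne rfl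
  rw [dist', dif_neg hxy] at h
  have := (pow_lt_pow_iff_right_of_lt_one₀ hr0 hr1).1 h
  exact absurd (Nat.find_le (n := i) hne) (by unfold firstDiff at this; omega)

/-! ### Birkhoff sums and the Walters condition -/

theorem birkhoff_zero (f : MarkovShift A → ℝ) (x : MarkovShift A) : birkhoff f 0 x = 0 :=
  Finset.sum_range_zero _

theorem birkhoff_one (f : MarkovShift A → ℝ) (x : MarkovShift A) : birkhoff f 1 x = f x :=
  Finset.sum_range_one _

theorem birkhoff_add (f : MarkovShift A → ℝ) (m n : ℕ) (x : MarkovShift A) :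
    birkhoff f (m + n) x = birkhoff f m x + birkhoff f n (shift^[m] x) :=
  birkhoffSum_add shift f m n x

theorem birkhoff_const_mul (c : ℝ) (f : MarkovShift A → ℝ) (n : ℕ) (x : MarkovShift A) :
    birkhoff (fun x => c * f x) n x = c * birkhoff f n x :=
  (Finset.mul_sum ..).symm

theorem waltersSup_nonneg (f : MarkovShift A → ℝ) (m : ℕ) : 0 ≤ waltersSup f m :=
  Real.sSup_nonneg <| by
    rintro _ ⟨n, -, x, y, -, rfl⟩
    exact abs_nonneg _

theorem SatisfiesWalters.abs_birkhoff_sub_le {f : MarkovShift A → ℝ} (hf : SatisfiesWalters f)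
    {n m : ℕ} (hm : 1 ≤ m) {x y : MarkovShift A} (h : x ∈ cylOf y (n + m)) :
    |birkhoff f n x - birkhoff f n y| ≤ waltersSup f m := by
  rcases Nat.eq_zero_or_pos n with rfl | hn
  · simpa only [birkhoff_zero, sub_self, abs_zero] using waltersSup_nonneg f m
  · exact le_csSup (hf.1 m hm) ⟨n, hn, x, y, h, rfl⟩

theorem SatisfiesWalters.continuous {f : MarkovShift A → ℝ} (hf : SatisfiesWalters f) :
    Continuous f := by
  refine continuous_iff_continuousAt.2 fun x => Metric.continuousAt_iff'.2 fun ε hε => ?_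
  obtain ⟨m, hmε, hm⟩ := ((hf.2.eventually_lt_const hε).and (eventually_ge_atTop 1)).exists
  filter_upwards [cylOf_mem_nhds x (1 + m)] with y hy
  simpa only [birkhoff_one, Real.dist_eq] using (hf.abs_birkhoff_sub_le hm hy).trans_lt hmε

open scoped Pointwise in
theorem waltersSet_const_mul {c : ℝ} (hc : 0 ≤ c) (f : MarkovShift A → ℝ) (m : ℕ) :
    waltersSet (fun x => c * f x) m = c • waltersSet f m := by
  have habs (n : ℕ) (x y : MarkovShift A) :
      |birkhoff (fun x => c * f x) n x - birkhoff (fun x => c * f x) n y| =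
        c • |birkhoff f n x - birkhoff f n y| := by
    rw [birkhoff_const_mul, birkhoff_const_mul, ← mul_sub, abs_mul, abs_of_nonneg hc, smul_eq_mul]
  ext t
  constructor
  · rintro ⟨n, hn, x, y, hxy, rfl⟩
    exact ⟨_, ⟨n, hn, x, y, hxy, rfl⟩, (habs n x y).symm⟩
  · rintro ⟨_, ⟨n, hn, x, y, hxy, rfl⟩, rfl⟩
    exact ⟨n, hn, x, y, hxy, (habs n x y).symm⟩

theorem waltersSup_const_mul {c : ℝ} (hc : 0 ≤ c) (f : MarkovShift A → ℝ) (m : ℕ) :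
    waltersSup (fun x => c * f x) m = c * waltersSup f m := by
  rw [waltersSup, waltersSet_const_mul hc, Real.sSup_smul_of_nonneg hc, smul_eq_mul, waltersSup]

theorem SatisfiesWalters.const_mul {f : MarkovShift A → ℝ} (hf : SatisfiesWalters f) {c : ℝ}
    (hc : 0 ≤ c) : SatisfiesWalters fun x => c * f x := by
  refine ⟨fun m hm => ?_, ?_⟩
  · rw [waltersSet_const_mul hc]
    exact (hf.1 m hm).smul_of_nonneg hc
  · simpa only [waltersSup_const_mul hc, mul_zero] using hf.2.const_mul c

theorem Var1Finite.exists_abs_sub_le {f : MarkovShift A → ℝ} (hf : Var1Finite f) :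
    ∃ V, ∀ x y : MarkovShift A, x.1 0 = y.1 0 → |f x - f y| ≤ V := by
  obtain ⟨V, hV⟩ := hf
  refine ⟨V, fun x y hxy => hV ⟨x, y, fun i hi => ?_, ?_⟩⟩
  · rwa [Nat.lt_one_iff.1 hi]
  · rw [birkhoff_one, birkhoff_one]

theorem Var1Finite.bddBelow_image {f : MarkovShift A → ℝ} (hf : Var1Finite f) (F : Finset ℕ) :
    BddBelow (f '' {x | x.1 0 ∈ F}) := by
  obtain ⟨V, hV⟩ := hf.exists_abs_sub_le
  have hsymb (a : ℕ) : BddBelow (f '' {x | x.1 0 = a}) := by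
    rcases Set.eq_empty_or_nonempty {x : MarkovShift A | x.1 0 = a} with h | ⟨x, hx⟩
    · simp only [h, Set.image_empty, bddBelow_empty]
    · refine ⟨f x - V, ?_⟩
      rintro _ ⟨y, hy, rfl⟩
      linarith [(abs_le.1 (hV x y (hx.trans hy.symm))).2]
  refine ((F.finite_toSet.bddBelow_biUnion).2 fun a _ => hsymb a).mono ?_
  rintro _ ⟨x, hx, rfl⟩
  exact Set.mem_biUnion hx ⟨x, rfl, rfl⟩

/-- Any symbol can be joined to any point in `K + 1` steps with the value of `g` at the symbol
lost only up to the additive constant `C`. -/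
def BoundedConnection (g : MarkovShift A → ℝ) (K : ℕ) (C : ℝ) : Prop :=
  ∀ x y : MarkovShift A, ∃ z, shift^[K + 1] z = y ∧ z.1 0 = x.1 0 ∧ g x ≤ C + birkhoff g (K + 1) z

theorem BoundedConnection.const_mul {g : MarkovShift A → ℝ} {K : ℕ} {C c : ℝ}
    (hg : BoundedConnection g K C) (hc : 0 ≤ c) :
    BoundedConnection (fun x => c * g x) K (c * C) := by
  intro x y
  obtain ⟨z, hzy, hzx, hz⟩ := hg x y
  refine ⟨z, hzy, hzx, ?_⟩
  rw [birkhoff_const_mul, ← mul_add]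
  exact mul_le_mul_of_nonneg_left hz hc

theorem FinitelyPrimitive.exists_boundedConnection (hA : FinitelyPrimitive A)
    {f : MarkovShift A → ℝ} (hf : Var1Finite f) : ∃ K C, BoundedConnection f K C := by
  obtain ⟨K, F, hK⟩ := hA.exists_preimage
  obtain ⟨V, hV⟩ := hf.exists_abs_sub_le
  obtain ⟨c, hc⟩ := hf.bddBelow_image F
  refine ⟨K, V - K * c, fun x y => ?_⟩
  obtain ⟨z, hzy, hzx, hzF⟩ := hK _ (admissible_coord x 0) y
  refine ⟨z, hzy, hzx, ?_⟩
  have hinner : K * c ≤ birkhoff f K (shift z) := by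
    rw [← nsmul_eq_mul]
    nth_rewrite 1 [← Finset.card_range K]
    refine Finset.card_nsmul_le_sum _ _ _ fun i hi => hc ⟨_, ?_, rfl⟩
    rw [Set.mem_ofPred_eq, shift_iterate_apply, zero_add]
    exact hzF i (Finset.mem_range.1 hi)
  have hsplit := birkhoff_add f 1 K z
  rw [birkhoff_one, add_comm 1 K, Function.iterate_one] at hsplit
  linarith [(abs_le.1 (hV x z hzx.symm)).2]

/-! ### The transfer operator on `[0, ∞]`-valued functions -/

/-- The Ruelle operator `L_g` on `[0, ∞]`-valued functions, where the defining series always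
makes sense. -/
noncomputable def transfer (g : MarkovShift A → ℝ) (u : MarkovShift A → ℝ≥0∞)
    (x : MarkovShift A) : ℝ≥0∞ :=
  ∑' y : {y : MarkovShift A // shift y = x}, ENNReal.ofReal (Real.exp (g y)) * u y

theorem transfer_mono (g : MarkovShift A → ℝ) : Monotone (transfer g) :=
  fun _ _ huv _ => ENNReal.tsum_le_tsum fun y => mul_le_mul_right (huv y) _

theorem transfer_smul (g : MarkovShift A → ℝ) (c : ℝ≥0∞) (u : MarkovShift A → ℝ≥0∞) :
    transfer g (c • u) = c • transfer g u := by
  funext x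
  simp only [transfer, Pi.smul_apply, smul_eq_mul, ← ENNReal.tsum_mul_left, mul_left_comm]

theorem transfer_iterate_apply (g : MarkovShift A → ℝ) (n : ℕ) (u : MarkovShift A → ℝ≥0∞)
    (x : MarkovShift A) : (transfer g)^[n] u x =
      ∑' z : {z : MarkovShift A // shift^[n] z = x},
        ENNReal.ofReal (Real.exp (birkhoff g n z)) * u z := by
  induction n generalizing x with
  | zero =>
    rw [tsum_eq_single (⟨x, rfl⟩ : {z : MarkovShift A // shift^[0] z = x})
      fun z hz => absurd (Subtype.ext z.2) hz, birkhoff_zero, Real.exp_zero,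
      ENNReal.ofReal_one, one_mul, Function.iterate_zero_apply]
  | succ n ih =>
    let e := Equiv.sigmaSubtypeFiberEquivSubtype (shift (A := A))^[n]
      (p := fun z => shift^[n + 1] z = x) (q := fun y => shift y = x)
      fun z => by rw [Function.iterate_succ_apply']
    rw [Function.iterate_succ_apply', transfer, ← e.tsum_eq, ENNReal.tsum_sigma']
    refine tsum_congr fun y => ?_
    rw [ih, ← ENNReal.tsum_mul_left]
    refine tsum_congr fun z => ?_
    have hez : (e ⟨y, z⟩ : MarkovShift A) = z := rfl
    rw [hez, ← mul_assoc, ← ENNReal.ofReal_mul (Real.exp_nonneg _), ← Real.exp_add, birkhoff_add,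
      z.2, birkhoff_one, add_comm]

/-- `u` depends only on the first `k` coordinates. -/
def IsCylinderConst (k : ℕ) (u : MarkovShift A → ℝ≥0∞) : Prop :=
  ∀ x, ∀ y ∈ cylOf x k, u y = u x

theorem SatisfiesWalters.exp_birkhoff_le {g : MarkovShift A → ℝ} (hg : SatisfiesWalters g)
    {n m : ℕ} (hm : 1 ≤ m) {x y : MarkovShift A} (h : x ∈ cylOf y (n + m)) :
    ENNReal.ofReal (Real.exp (birkhoff g n x)) ≤
      ENNReal.ofReal (Real.exp (waltersSup g m)) * ENNReal.ofReal (Real.exp (birkhoff g n y)) := by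
  rw [← ENNReal.ofReal_mul (Real.exp_nonneg _), ← Real.exp_add]
  have := (abs_le.1 (hg.abs_birkhoff_sub_le hm h)).2
  gcongr
  linarith

theorem exists_injective_fiber (n : ℕ) {m : ℕ} (hm : 1 ≤ m) {x y : MarkovShift A}
    (h : x ∈ cylOf y m) :
    ∃ e : {z : MarkovShift A // shift^[n] z = x} → {z : MarkovShift A // shift^[n] z = y},
      Function.Injective e ∧ ∀ z, (z : MarkovShift A) ∈ cylOf (e z) (n + m) := by
  have hbranch (z : {z : MarkovShift A // shift^[n] z = x}) :
      ∃ z' ∈ cylOf z.1 (n + 1), shift^[n] z' = y := by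
    refine exists_mem_cylOf_iterate_shift_eq z.1 y n ?_
    rw [← h 0 hm, ← congrArg (fun w => w.1 0) z.2, shift_iterate_apply, zero_add]
  choose e he hey using hbranch
  have hcyl (z) : z.1 ∈ cylOf (e z) n := mem_cylOf_comm.1 (cylOf_subset_cylOf _ n.le_succ (he z))
  refine ⟨fun z => ⟨e z, hey z⟩, fun z z' hzz' => Subtype.ext ?_, fun z => ?_⟩
  · have heq : e z = e z' := congrArg Subtype.val hzz'
    refine eq_of_mem_cylOf_of_iterate_shift_eq (n := n) ?_ (z.2.trans z'.2.symm)
    rw [← cylOf_eq_of_mem (mem_cylOf_comm.1 (hcyl z')), ← heq]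
    exact hcyl z
  · refine mem_cylOf_add (hcyl z) ?_
    rwa [z.2, hey z]

theorem SatisfiesWalters.transfer_iterate_le {g : MarkovShift A → ℝ} (hg : SatisfiesWalters g)
    {n m k : ℕ} (hm : 1 ≤ m) (hk : k ≤ n + m) {u : MarkovShift A → ℝ≥0∞}
    (hu : IsCylinderConst k u) {x y : MarkovShift A} (h : x ∈ cylOf y m) :
    (transfer g)^[n] u x ≤
      ENNReal.ofReal (Real.exp (waltersSup g m)) * (transfer g)^[n] u y := by
  obtain ⟨e, he, hcyl⟩ := exists_injective_fiber n hm h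
  rw [transfer_iterate_apply, transfer_iterate_apply, ← ENNReal.tsum_mul_left]
  refine ENNReal.summable.tsum_le_tsum_of_inj e he (fun _ _ => zero_le) (fun z => ?_)
    ENNReal.summable
  rw [← mul_assoc, hu _ _ (cylOf_subset_cylOf _ hk (hcyl z))]
  gcongr
  exact hg.exp_birkhoff_le hm (hcyl z)

theorem tsum_fiber_eq_tsum_cons (v : MarkovShift A → ℝ≥0∞) (x : MarkovShift A) :
    ∑' y : {y : MarkovShift A // shift y = x}, v y =
      ∑' a : ℕ, if h : A a (x.1 0) = true then v (cons a x h) else 0 := by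
  rw [← (injective_coord_zero_fiber x).tsum_eq]
  · refine tsum_congr ?_
    rintro ⟨y, rfl⟩
    have hy : A (y.1 0) ((shift y).1 0) = true := y.2 0
    have hcons : cons (y.1 0) (shift y) hy = y := eq_of_coord_zero_eq_of_shift_eq rfl rfl
    exact ((dif_pos hy).trans (congrArg v hcons)).symm
  · intro a ha
    have hax : A a (x.1 0) = true := by
      by_contra hax
      exact ha (dif_neg hax)
    exact ⟨⟨cons a x hax, shift_cons a x hax⟩, rfl⟩

theorem continuous_cons (a : ℕ) :
    Continuous fun x : {x : MarkovShift A // A a (x.1 0) = true} => cons a x.1 x.2 := by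
  refine Continuous.subtype_mk (continuous_pi fun i => ?_) _
  cases i with
  | zero => exact continuous_const
  | succ i =>
    exact (continuous_apply i).comp (continuous_subtype_val.comp continuous_subtype_val)

theorem measurable_tsum_fiber {v : MarkovShift A → ℝ≥0∞} (hv : Measurable v) :
    Measurable fun x => ∑' y : {y : MarkovShift A // shift y = x}, v y := by
  simp only [tsum_fiber_eq_tsum_cons]
  refine Measurable.tsum fun a => ?_
  have hcoord : Continuous fun x : MarkovShift A => x.1 0 :=
    (continuous_apply 0).comp continuous_subtype_val
  have hdom : MeasurableSet {x : MarkovShift A | A a (x.1 0) = true} :=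
    ((isOpen_discrete {b | A a b = true}).preimage hcoord).measurableSet
  let : ∀ x, Decidable (x ∈ {x : MarkovShift A | A a (x.1 0) = true}) := fun _ =>
    instDecidableEqBool _ _
  exact Measurable.dite (s := {x : MarkovShift A | A a (x.1 0) = true}) (g := fun _ => 0)
    (hv.comp (continuous_cons a).measurable) measurable_const hdom

theorem measurable_transfer {g : MarkovShift A → ℝ} (hg : Measurable g)
    {u : MarkovShift A → ℝ≥0∞} (hu : Measurable u) : Measurable (transfer g u) :=
  measurable_tsum_fiber (hg.exp.ennreal_ofReal.mul hu)

theorem measurable_transfer_iterate {g : MarkovShift A → ℝ} (hg : Measurable g)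
    {u : MarkovShift A → ℝ≥0∞} (hu : Measurable u) (n : ℕ) : Measurable ((transfer g)^[n] u) :=
  Function.Iterate.rec (fun v => Measurable v) hu (fun _ hv => measurable_transfer hg hv) n

/-! ### The dual operator -/

/-- The measure `u ↦ L_g u (x)`. -/
noncomputable def fiberMeasure (g : MarkovShift A → ℝ) (x : MarkovShift A) :
    Measure (MarkovShift A) :=
  Measure.sum fun y : {y : MarkovShift A // shift y = x} =>
    ENNReal.ofReal (Real.exp (g y)) • Measure.dirac y.1

theorem lintegral_fiberMeasure (g : MarkovShift A → ℝ) {u : MarkovShift A → ℝ≥0∞}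
    (hu : Measurable u) (x : MarkovShift A) : ∫⁻ y, u y ∂fiberMeasure g x = transfer g u x := by
  simp only [fiberMeasure, transfer, lintegral_sum_measure, lintegral_smul_measure,
    lintegral_dirac' _ hu, smul_eq_mul]

theorem fiberMeasure_univ (g : MarkovShift A → ℝ) (x : MarkovShift A) :
    fiberMeasure g x Set.univ = transfer g 1 x := by
  rw [← lintegral_one, ← Pi.one_def, ← lintegral_fiberMeasure g measurable_one]

theorem measurable_fiberMeasure {g : MarkovShift A → ℝ} (hg : Measurable g) :
    Measurable (fiberMeasure g) := by
  refine Measure.measurable_of_measurable_coe _ fun s hs => ?_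
  have hind : Measurable (s.indicator (1 : MarkovShift A → ℝ≥0∞)) := measurable_one.indicator hs
  simp only [← lintegral_indicator_one hs, lintegral_fiberMeasure g hind]
  exact measurable_transfer hg hind

/-- The dual operator `L_g^*` on measures. -/
noncomputable def dualMeasure (g : MarkovShift A → ℝ) (ν : Measure (MarkovShift A)) :
    Measure (MarkovShift A) :=
  ν.bind (fiberMeasure g)

theorem lintegral_dualMeasure {g : MarkovShift A → ℝ} (hg : Measurable g)
    (ν : Measure (MarkovShift A)) {u : MarkovShift A → ℝ≥0∞} (hu : Measurable u) :
    ∫⁻ x, u x ∂dualMeasure g ν = ∫⁻ x, transfer g u x ∂ν := by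
  rw [dualMeasure, Measure.lintegral_bind (measurable_fiberMeasure hg).aemeasurable hu.aemeasurable]
  simp only [lintegral_fiberMeasure g hu]

theorem lintegral_transfer_iterate {g : MarkovShift A → ℝ} (hg : Measurable g)
    {ν : Measure (MarkovShift A)} {c : ℝ≥0∞} (hν : dualMeasure g ν = c • ν)
    {u : MarkovShift A → ℝ≥0∞} (hu : Measurable u) (n : ℕ) :
    ∫⁻ x, (transfer g)^[n] u x ∂ν = c ^ n * ∫⁻ x, u x ∂ν := by
  induction n with
  | zero => rw [pow_zero, one_mul, Function.iterate_zero_apply]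
  | succ n ih =>
    rw [Function.iterate_succ_apply', ← lintegral_dualMeasure hg ν
      (measurable_transfer_iterate hg hu n), hν, lintegral_smul_measure, ih, smul_eq_mul,
      ← mul_assoc, pow_succ']

theorem FinitelyPrimitive.isOpenPosMeasure (hA : FinitelyPrimitive A) {g : MarkovShift A → ℝ}
    (hg : Measurable g) {ν : Measure (MarkovShift A)} [NeZero ν] {c : ℝ≥0∞}
    (hν : dualMeasure g ν = c • ν) : ν.IsOpenPosMeasure := by
  refine ⟨fun U hU hne hνU => ?_⟩
  obtain ⟨n, hn⟩ := hA.exists_iterate_shift_image_eq_univ hU hne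
  have hind : Measurable (U.indicator (1 : MarkovShift A → ℝ≥0∞)) :=
    measurable_one.indicator hU.measurableSet
  have hzero : ∫⁻ x, (transfer g)^[n] (U.indicator 1) x ∂ν = 0 := by
    rw [lintegral_transfer_iterate hg hν hind, lintegral_indicator_one hU.measurableSet, hνU,
      mul_zero]
  rw [lintegral_eq_zero_iff (measurable_transfer_iterate hg hind n)] at hzero
  obtain ⟨x, hx⟩ := hzero.exists
  obtain ⟨z, hzU, hzx⟩ := hn.ge (Set.mem_univ x)
  rw [transfer_iterate_apply, Pi.zero_apply, ENNReal.tsum_eq_zero] at hx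
  have hz := hx ⟨z, hzx⟩
  rw [Set.indicator_of_mem hzU, Pi.one_apply, mul_one, ENNReal.ofReal_eq_zero] at hz
  exact hz.not_gt (Real.exp_pos _)

theorem toReal_transfer (g : MarkovShift A → ℝ) {u : MarkovShift A → ℝ≥0∞} (hu : ∀ x, u x ≠ ∞)
    (x : MarkovShift A) : (transfer g u x).toReal = ruelle g (fun y => (u y).toReal) x := by
  have hterm (y : {y : MarkovShift A // shift y = x}) :
      ENNReal.ofReal (Real.exp (g y)) * u y ≠ ∞ := ENNReal.mul_ne_top ENNReal.ofReal_ne_top (hu y)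
  rw [transfer, ENNReal.tsum_toReal_eq hterm, ruelle]
  simp only [ENNReal.toReal_mul, ENNReal.toReal_ofReal (Real.exp_nonneg _)]

theorem isFiniteMeasure_dualMeasure {g : MarkovShift A → ℝ} (hg : Measurable g) {D : ℝ≥0∞}
    (hD : D ≠ ∞) (hgD : ∀ x, transfer g 1 x ≤ D) (ν : Measure (MarkovShift A))
    [IsFiniteMeasure ν] : IsFiniteMeasure (dualMeasure g ν) := by
  refine ⟨?_⟩
  rw [← lintegral_one, lintegral_dualMeasure hg ν measurable_const]
  refine (lintegral_mono hgD).trans_lt ?_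
  rw [lintegral_const]
  exact ENNReal.mul_lt_top hD.lt_top (measure_lt_top ν _)

theorem toReal_lintegral_dualMeasure {g : MarkovShift A → ℝ} (hg : Measurable g) {D : ℝ≥0∞}
    (hD : D ≠ ∞) (hgD : ∀ x, transfer g 1 x ≤ D) (ν : Measure (MarkovShift A))
    (u : BoundedContinuousFunction (MarkovShift A) NNReal) :
    (∫⁻ x, u x ∂dualMeasure g ν).toReal = ∫ x, ruelle g (fun y => u y) x ∂ν := by
  have hu : Measurable fun x => (u x : ℝ≥0∞) := u.continuous.measurable.coe_nnreal_ennreal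
  have hfin (x) : transfer g (fun y => (u y : ℝ≥0∞)) x < ∞ := by
    have : IsFiniteMeasure (fiberMeasure g x) :=
      ⟨(fiberMeasure_univ g x).trans_lt ((hgD x).trans_lt hD.lt_top)⟩
    rw [← lintegral_fiberMeasure g hu]
    exact u.lintegral_lt_top_of_nnreal _
  rw [lintegral_dualMeasure hg ν hu, ← integral_toReal (measurable_transfer hg hu).aemeasurable
    (ae_of_all _ hfin)]
  simp only [toReal_transfer g fun _ => ENNReal.coe_ne_top, ENNReal.coe_toReal]

theorem dualMeasure_eq_smul_of_integral_ruelle {g : MarkovShift A → ℝ} (hg : Measurable g)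
    {D : ℝ≥0∞} (hD : D ≠ ∞) (hgD : ∀ x, transfer g 1 x ≤ D) {ν : Measure (MarkovShift A)}
    [IsFiniteMeasure ν] {p : ℝ}
    (hν : ∀ u : MarkovShift A → ℝ, Continuous u → BoundedFun u →
      ∫ x, ruelle g u x ∂ν = Real.exp p * ∫ x, u x ∂ν) :
    dualMeasure g ν = ENNReal.ofReal (Real.exp p) • ν := by
  have := isFiniteMeasure_dualMeasure hg hD hgD ν
  refine ext_of_forall_lintegral_eq_of_IsFiniteMeasure fun u => ?_
  have hcont : Continuous fun x => (u x : ℝ) := NNReal.continuous_coe.comp u.continuous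
  have hbdd : BoundedFun fun x => (u x : ℝ) :=
    ⟨nndist u 0, fun x => (abs_of_nonneg (u x).coe_nonneg).trans_le
      (BoundedContinuousFunction.NNReal.upper_bound u x)⟩
  rw [lintegral_smul_measure, smul_eq_mul,
    ← ENNReal.toReal_eq_toReal_iff' (u.lintegral_lt_top_of_nnreal _).ne
      (ENNReal.mul_ne_top ENNReal.ofReal_ne_top (u.lintegral_lt_top_of_nnreal _).ne),
    toReal_lintegral_dualMeasure hg hD hgD, hν _ hcont hbdd, ENNReal.toReal_mul,
    ENNReal.toReal_ofReal (Real.exp_nonneg p),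
    BoundedContinuousFunction.toReal_lintegral_coe_eq_integral]

/-! ### Regularity of eigenfunctions -/

/-- The largest minorant of `u` depending only on the first `k` coordinates. -/
noncomputable def cylInf (k : ℕ) (u : MarkovShift A → ℝ≥0∞) (x : MarkovShift A) : ℝ≥0∞ :=
  ⨅ z ∈ cylOf x k, u z

theorem isCylinderConst_cylInf (k : ℕ) (u : MarkovShift A → ℝ≥0∞) :
    IsCylinderConst k (cylInf k u) :=
  fun _ _ h => by rw [cylInf, cylOf_eq_of_mem h, cylInf]

theorem cylInf_le (k : ℕ) (u : MarkovShift A → ℝ≥0∞) : cylInf k u ≤ u :=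
  fun x => biInf_le u (mem_cylOf_self x k)

theorem monotone_cylInf (u : MarkovShift A → ℝ≥0∞) : Monotone fun k => cylInf k u :=
  fun _ _ hkl x => biInf_mono (cylOf_subset_cylOf x hkl)

theorem iSup_cylInf {u : MarkovShift A → ℝ≥0∞} (hu : Continuous u) (x : MarkovShift A) :
    ⨆ k, cylInf k u x = u x := by
  refine le_antisymm (iSup_le fun k => cylInf_le k u x) (le_of_forall_lt fun b hb => ?_)
  obtain ⟨b', hbb', hb'⟩ := exists_between hb
  obtain ⟨k, hk⟩ := exists_cylOf_subset (isOpen_lt continuous_const hu) hb'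
  exact hbb'.trans_le (le_iSup_of_le k (le_iInf₂ fun z hz => (hk hz).le))

theorem IsCylinderConst.continuous {k : ℕ} {u : MarkovShift A → ℝ≥0∞} (hu : IsCylinderConst k u) :
    Continuous u :=
  (IsLocallyConstant.iff_eventually_eq u).2
    (fun x => mem_of_superset (cylOf_mem_nhds x k) (hu x)) |>.continuous

theorem measurable_cylInf (k : ℕ) (u : MarkovShift A → ℝ≥0∞) : Measurable (cylInf k u) :=
  (isCylinderConst_cylInf k u).continuous.measurable

/-- The supremum of the functions `c⁻ᵏ L_gᵏ u_k`, where `u_k` is the largest minorant of `u`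
depending only on `k` coordinates; it inherits the distortion bound of those functions. -/
noncomputable def cylinderApprox (g : MarkovShift A → ℝ) (c : ℝ≥0∞) (u : MarkovShift A → ℝ≥0∞)
    (x : MarkovShift A) : ℝ≥0∞ :=
  ⨆ k, (c ^ k)⁻¹ * (transfer g)^[k] (cylInf k u) x

theorem SatisfiesWalters.cylinderApprox_le {g : MarkovShift A → ℝ} (hg : SatisfiesWalters g)
    (c : ℝ≥0∞) (u : MarkovShift A → ℝ≥0∞) {m : ℕ} (hm : 1 ≤ m) {x y : MarkovShift A}
    (h : x ∈ cylOf y m) :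
    cylinderApprox g c u x ≤
      ENNReal.ofReal (Real.exp (waltersSup g m)) * cylinderApprox g c u y := by
  rw [cylinderApprox, cylinderApprox, ENNReal.mul_iSup]
  refine iSup_mono fun k => ?_
  rw [mul_left_comm]
  gcongr
  exact hg.transfer_iterate_le hm (k.le_add_right m) (isCylinderConst_cylInf k u) h

theorem transfer_iterate_eq_of_eigen {g : MarkovShift A → ℝ} {c : ℝ≥0∞}
    {u : MarkovShift A → ℝ≥0∞} (hu : transfer g u = c • u) (n : ℕ) :
    (transfer g)^[n] u = c ^ n • u := by
  induction n with
  | zero => rw [pow_zero, one_smul, Function.iterate_zero_apply]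
  | succ n ih => rw [Function.iterate_succ_apply', ih, transfer_smul, hu, smul_smul, pow_succ]

theorem cylinderApprox_le_of_eigen {g : MarkovShift A → ℝ} {c : ℝ≥0∞} (hc0 : c ≠ 0) (hc : c ≠ ∞)
    {u : MarkovShift A → ℝ≥0∞} (hu : transfer g u = c • u) : cylinderApprox g c u ≤ u := by
  refine fun x => iSup_le fun k => ?_
  calc (c ^ k)⁻¹ * (transfer g)^[k] (cylInf k u) x
    _ ≤ (c ^ k)⁻¹ * (transfer g)^[k] u x := by
      gcongr
      exact (transfer_mono g).iterate k (cylInf_le k u) x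
    _ = u x := by
      rw [transfer_iterate_eq_of_eigen hu, Pi.smul_apply, smul_eq_mul,
        ENNReal.inv_mul_cancel_left (pow_ne_zero k hc0) (ENNReal.pow_ne_top hc)]

theorem lintegral_le_lintegral_cylinderApprox {g : MarkovShift A → ℝ} (hg : Measurable g)
    {c : ℝ≥0∞} (hc0 : c ≠ 0) (hc : c ≠ ∞) {ν : Measure (MarkovShift A)}
    (hν : dualMeasure g ν = c • ν) {u : MarkovShift A → ℝ≥0∞} (hu : Continuous u) :
    ∫⁻ x, u x ∂ν ≤ ∫⁻ x, cylinderApprox g c u x ∂ν := by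
  simp only [← iSup_cylInf hu]
  rw [lintegral_iSup (fun k => measurable_cylInf k u) (monotone_cylInf u)]
  refine iSup_le fun k => ?_
  have hk : ∫⁻ x, (c ^ k)⁻¹ * (transfer g)^[k] (cylInf k u) x ∂ν = ∫⁻ x, cylInf k u x ∂ν := by
    rw [lintegral_const_mul _ (measurable_transfer_iterate hg (measurable_cylInf k u) k),
      lintegral_transfer_iterate hg hν (measurable_cylInf k u),
      ENNReal.inv_mul_cancel_left (pow_ne_zero k hc0) (ENNReal.pow_ne_top hc)]
  rw [← hk]
  exact lintegral_mono fun x =>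
    le_iSup (fun k => (c ^ k)⁻¹ * (transfer g)^[k] (cylInf k u) x) k

theorem cylinderApprox_ae_eq {g : MarkovShift A → ℝ} (hg : Measurable g)
    {c : ℝ≥0∞} (hc0 : c ≠ 0) (hc : c ≠ ∞) {ν : Measure (MarkovShift A)}
    (hν : dualMeasure g ν = c • ν) {u : MarkovShift A → ℝ≥0∞} (hu : Continuous u)
    (hint : ∫⁻ x, u x ∂ν ≠ ∞) (heig : transfer g u = c • u) : cylinderApprox g c u =ᵐ[ν] u := by
  have hle := cylinderApprox_le_of_eigen hc0 hc heig
  exact ae_eq_of_ae_le_of_lintegral_le (ae_of_all ν hle)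
    ((lintegral_mono hle).trans_lt hint.lt_top).ne hu.aemeasurable
    (lintegral_le_lintegral_cylinderApprox hg hc0 hc hν hu)

theorem SatisfiesWalters.eigenfunction_le {g : MarkovShift A → ℝ} (hg : SatisfiesWalters g)
    {c : ℝ≥0∞} (hc0 : c ≠ 0) (hc : c ≠ ∞) {ν : Measure (MarkovShift A)} [ν.IsOpenPosMeasure]
    (hν : dualMeasure g ν = c • ν) {u : MarkovShift A → ℝ≥0∞} (hu : Continuous u)
    (hint : ∫⁻ x, u x ∂ν ≠ ∞) (heig : transfer g u = c • u) {m : ℕ} (hm : 1 ≤ m)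
    {x y : MarkovShift A} (h : x ∈ cylOf y m) :
    u x ≤ ENNReal.ofReal (Real.exp (waltersSup g m)) * u y := by
  let s := {z | cylinderApprox g c u z = u z}
  have hs : Dense s := Measure.dense_of_ae
    (cylinderApprox_ae_eq hg.continuous.measurable hc0 hc hν hu hint heig)
  have hclosed : IsClosed {q : MarkovShift A × MarkovShift A |
      u q.1 ≤ ENNReal.ofReal (Real.exp (waltersSup g m)) * u q.2} :=
    isClosed_le (hu.comp continuous_fst)
      ((ENNReal.continuous_const_mul ENNReal.ofReal_ne_top).comp (hu.comp continuous_snd))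
  have hopen : IsOpen (cylOf y m ×ˢ cylOf y m) := (isOpen_cylOf y m).prod (isOpen_cylOf y m)
  have hsub : cylOf y m ×ˢ cylOf y m ∩ s ×ˢ s ⊆ {q : MarkovShift A × MarkovShift A |
      u q.1 ≤ ENNReal.ofReal (Real.exp (waltersSup g m)) * u q.2} := by
    rintro ⟨a, b⟩ ⟨⟨ha, hb⟩, has, hbs⟩
    have hab : a ∈ cylOf b m := cylOf_eq_of_mem hb ▸ ha
    simpa only [Set.mem_ofPred_eq, ← show _ = u a from has, ← show _ = u b from hbs]
      using hg.cylinderApprox_le c u hm hab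
  exact ((hs.prod hs).open_subset_closure_inter hopen).trans (closure_minimal hsub hclosed)
    (Set.mk_mem_prod h (mem_cylOf_self y m))

theorem BoundedConnection.eigenfunction_le {g : MarkovShift A → ℝ} {K : ℕ} {C : ℝ}
    (hg : BoundedConnection g K C) {c : ℝ≥0∞} (hc0 : c ≠ 0) (hc : c ≠ ∞)
    {u : MarkovShift A → ℝ≥0∞} (heig : transfer g u = c • u) {W : ℝ≥0∞}
    (hW : ∀ x y, x ∈ cylOf y 1 → u x ≤ W * u y) (x y : MarkovShift A) :
    u x ≤ ENNReal.ofReal (Real.exp C) * W * c ^ K * u y := by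
  choose e hey hex hge using fun w : {w : MarkovShift A // shift w = x} => hg w.1 y
  have hinj : Function.Injective fun w =>
      (⟨e w, hey w⟩ : {z : MarkovShift A // shift^[K + 1] z = y}) := by
    refine fun w w' hww' => injective_coord_zero_fiber x ?_
    simpa only [hex] using congrArg (fun z => z.1.1 0) hww'
  have hterm (w : {w : MarkovShift A // shift w = x}) :
      ENNReal.ofReal (Real.exp (g w)) * u w ≤ ENNReal.ofReal (Real.exp C) * W *
        (ENNReal.ofReal (Real.exp (birkhoff g (K + 1) (e w))) * u (e w)) := by
    have hcyl : w.1 ∈ cylOf (e w) 1 := fun i hi => by rw [Nat.lt_one_iff.1 hi, hex w]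
    rw [mul_mul_mul_comm, ← ENNReal.ofReal_mul (Real.exp_nonneg C), ← Real.exp_add]
    gcongr
    · exact hge w
    · exact hW _ _ hcyl
  have hle : c * u x ≤ ENNReal.ofReal (Real.exp C) * W * (c ^ (K + 1) * u y) := by
    have hsum := ENNReal.summable.tsum_le_tsum_of_inj
      (g := fun z : {z : MarkovShift A // shift^[K + 1] z = y} => ENNReal.ofReal (Real.exp C) * W *
        (ENNReal.ofReal (Real.exp (birkhoff g (K + 1) z)) * u z))
      _ hinj (fun _ _ => zero_le) hterm ENNReal.summable
    rwa [ENNReal.tsum_mul_left, ← transfer_iterate_apply, transfer_iterate_eq_of_eigen heig,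
      ← transfer, heig] at hsum
  rw [← ENNReal.mul_le_mul_iff_right hc0 hc]
  exact hle.trans_eq (by ring)

theorem IsRPF.transfer_ofReal {g h : MarkovShift A → ℝ} {p : ℝ} {ν : Measure (MarkovShift A)}
    (hR : IsRPF g p h ν) : transfer g (fun x => ENNReal.ofReal (h x)) =
      ENNReal.ofReal (Real.exp p) • fun x => ENNReal.ofReal (h x) := by
  obtain ⟨-, hpos, heig, -⟩ := hR
  funext x
  have hreal : (transfer g (fun x => ENNReal.ofReal (h x)) x).toReal = Real.exp p * h x := by
    simp only [toReal_transfer g fun _ => ENNReal.ofReal_ne_top,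
      ENNReal.toReal_ofReal (hpos _).le, heig]
  have hfin : transfer g (fun x => ENNReal.ofReal (h x)) x ≠ ∞ := by
    refine (ENNReal.toReal_pos_iff.1 ?_).2.ne
    rw [hreal]
    exact mul_pos (Real.exp_pos p) (hpos x)
  rw [Pi.smul_apply, smul_eq_mul, ← ENNReal.ofReal_mul (Real.exp_nonneg p), ← hreal,
    ENNReal.ofReal_toReal hfin]

theorem IsRPF.integrable {g h : MarkovShift A → ℝ} {p : ℝ} {ν : Measure (MarkovShift A)}
    (hR : IsRPF g p h ν) : Integrable h ν := by
  obtain ⟨-, -, -, -, -, hint⟩ := hR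
  exact Integrable.of_integral_ne_zero (hint ▸ one_ne_zero)

theorem IsRPF.dualMeasure_eq {g h : MarkovShift A → ℝ} {p : ℝ} {ν : Measure (MarkovShift A)}
    (hR : IsRPF g p h ν) (hg : Measurable g) {D : ℝ≥0∞} (hD : D ≠ ∞)
    (hgD : ∀ x, transfer g 1 x ≤ D) : dualMeasure g ν = ENNReal.ofReal (Real.exp p) • ν := by
  obtain ⟨-, -, -, hprob, hdual, -⟩ := hR
  exact dualMeasure_eq_smul_of_integral_ruelle hg hD hgD hdual

theorem IsRPF.exp_pressure_le {g h : MarkovShift A → ℝ} {p : ℝ} {ν : Measure (MarkovShift A)}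
    (hR : IsRPF g p h ν) (hg : Measurable g) {D : ℝ≥0∞} (hD : D ≠ ∞)
    (hgD : ∀ x, transfer g 1 x ≤ D) : ENNReal.ofReal (Real.exp p) ≤ D := by
  have hprob : IsProbabilityMeasure ν := hR.2.2.2.1
  calc ENNReal.ofReal (Real.exp p)
    _ = ∫⁻ x, transfer g 1 x ∂ν := by
      simpa only [Pi.one_apply, lintegral_one, hR.dualMeasure_eq hg hD hgD, Measure.smul_apply,
        measure_univ, smul_eq_mul, mul_one] using
        lintegral_dualMeasure hg ν (measurable_one (α := ℝ≥0∞))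
    _ ≤ ∫⁻ _, D ∂ν := lintegral_mono hgD
    _ = D := by rw [lintegral_const, measure_univ, mul_one]

theorem IsRPF.eigenfunction_le {g h : MarkovShift A → ℝ} {p : ℝ} {ν : Measure (MarkovShift A)}
    (hR : IsRPF g p h ν) (hA : FinitelyPrimitive A) (hg : SatisfiesWalters g) {D : ℝ≥0∞}
    (hD : D ≠ ∞) (hgD : ∀ x, transfer g 1 x ≤ D) {m : ℕ} (hm : 1 ≤ m) {x y : MarkovShift A}
    (hxy : x ∈ cylOf y m) : h x ≤ Real.exp (waltersSup g m) * h y := by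
  have hmeas := hg.continuous.measurable
  have hν := hR.dualMeasure_eq hmeas hD hgD
  have hprob : IsProbabilityMeasure ν := hR.2.2.2.1
  have : ν.IsOpenPosMeasure := hA.isOpenPosMeasure hmeas hν
  have hle := hg.eigenfunction_le (ENNReal.ofReal_pos.2 (Real.exp_pos p)).ne' ENNReal.ofReal_ne_top
    hν (ENNReal.continuous_ofReal.comp hR.1) hR.integrable.lintegral_lt_top.ne hR.transfer_ofReal
    hm hxy
  have hnonneg : 0 ≤ Real.exp (waltersSup g m) * h y :=
    mul_nonneg (Real.exp_nonneg _) (hR.2.1 y).le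
  rwa [Function.comp_apply, Function.comp_apply, ← ENNReal.ofReal_mul (Real.exp_nonneg _),
    ENNReal.ofReal_le_ofReal_iff hnonneg] at hle

theorem IsRPF.eigenfunction_le_of_boundedConnection {g h : MarkovShift A → ℝ} {p : ℝ}
    {ν : Measure (MarkovShift A)} (hR : IsRPF g p h ν) (hA : FinitelyPrimitive A)
    (hg : SatisfiesWalters g) {D : ℝ} (hgD : ∀ x, transfer g 1 x ≤ ENNReal.ofReal (Real.exp D))
    {K : ℕ} {C : ℝ} (hC : BoundedConnection g K C) (x y : MarkovShift A) :
    h x ≤ Real.exp (C + waltersSup g 1 + K * D) * h y := by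
  have hW (x y : MarkovShift A) (hxy : x ∈ cylOf y 1) : ENNReal.ofReal (h x) ≤
      ENNReal.ofReal (Real.exp (waltersSup g 1)) * ENNReal.ofReal (h y) := by
    rw [← ENNReal.ofReal_mul (Real.exp_nonneg _)]
    exact ENNReal.ofReal_le_ofReal
      (hR.eigenfunction_le hA hg ENNReal.ofReal_ne_top hgD le_rfl hxy)
  have hpD := hR.exp_pressure_le hg.continuous.measurable ENNReal.ofReal_ne_top hgD
  have hnonneg : 0 ≤ Real.exp (C + waltersSup g 1 + K * D) * h y :=
    mul_nonneg (Real.exp_nonneg _) (hR.2.1 y).le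
  rw [← ENNReal.ofReal_le_ofReal_iff hnonneg]
  calc ENNReal.ofReal (h x)
    _ ≤ ENNReal.ofReal (Real.exp C) * ENNReal.ofReal (Real.exp (waltersSup g 1)) *
          ENNReal.ofReal (Real.exp p) ^ K * ENNReal.ofReal (h y) :=
      hC.eigenfunction_le (ENNReal.ofReal_pos.2 (Real.exp_pos p)).ne' ENNReal.ofReal_ne_top
        hR.transfer_ofReal hW x y
    _ ≤ ENNReal.ofReal (Real.exp C) * ENNReal.ofReal (Real.exp (waltersSup g 1)) *
          ENNReal.ofReal (Real.exp D) ^ K * ENNReal.ofReal (h y) := by gcongr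
    _ = ENNReal.ofReal (Real.exp (C + waltersSup g 1 + K * D) * h y) := by
      rw [← ENNReal.ofReal_pow (Real.exp_nonneg D), ← Real.exp_nat_mul,
        ← ENNReal.ofReal_mul (by positivity), ← Real.exp_add, ← ENNReal.ofReal_mul (by positivity),
        ← Real.exp_add, ← ENNReal.ofReal_mul (by positivity)]

/-! ### Uniform bounds on `L_{βf} 1` -/

theorem BoundedConnection.exists_periodic {f : MarkovShift A → ℝ} {K : ℕ} {C : ℝ}
    (hC : BoundedConnection f K C) (hf : SatisfiesWalters f) (x y : MarkovShift A) :
    ∃ z, shift^[K + 1 + (K + 1)] z = z ∧ z.1 0 = x.1 0 ∧ z.1 (K + 1) = y.1 0 ∧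
      f y ≤ 2 * C - f x + waltersSup f 1 + birkhoff f (K + 1 + (K + 1)) z := by
  obtain ⟨z₂, hz₂x, hz₂y, hfy⟩ := hC y x
  obtain ⟨z₁, hz₁z₂, hz₁x, hfx⟩ := hC x z₂
  have hcoord (i : ℕ) : z₁.1 (i + (K + 1)) = z₂.1 i := by rw [← hz₁z₂, shift_iterate_apply]
  have hreturn : z₁.1 (K + 1 + (K + 1)) = z₁.1 0 := by
    rw [hcoord, hz₁x, ← hz₂x, shift_iterate_apply, zero_add]
  obtain ⟨z, hz, hper⟩ := exists_mem_cylOf_iterate_shift_eq_self z₁ (by omega) hreturn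
  refine ⟨z, hper, (hz 0 (by omega)).trans hz₁x, ?_, ?_⟩
  · rw [hz _ (by omega), ← zero_add (K + 1), hcoord, hz₂y]
  · have hsplit := birkhoff_add f (K + 1) (K + 1) z₁
    rw [hz₁z₂] at hsplit
    linarith [(abs_le.1 (hf.abs_birkhoff_sub_le le_rfl hz)).1]

theorem BoundedConnection.exists_transfer_one_le {f : MarkovShift A → ℝ} {K : ℕ} {C : ℝ}
    (hC : BoundedConnection f K C) (hf : SatisfiesWalters f) (x : MarkovShift A)
    (hsum : Summable fun z : {z : MarkovShift A //
      shift^[K + 1 + (K + 1)] z = z ∧ z.1 0 = x.1 0} =>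
        Real.exp (birkhoff f (K + 1 + (K + 1)) z)) :
    ∃ D : ℝ, ∀ y, transfer f 1 y ≤ ENNReal.ofReal (Real.exp D) := by
  choose q hq hq₀ hqK hqf using hC.exists_periodic hf x
  let b (z : {z : MarkovShift A // shift^[K + 1 + (K + 1)] z = z ∧ z.1 0 = x.1 0}) : ℝ :=
    Real.exp (2 * C - f x + waltersSup f 1) * Real.exp (birkhoff f (K + 1 + (K + 1)) z)
  refine ⟨∑' z, b z, fun y => ?_⟩
  have hinj : Function.Injective fun w : {w : MarkovShift A // shift w = y} =>
      (⟨q w, hq w, hq₀ w⟩ : {z : MarkovShift A //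
        shift^[K + 1 + (K + 1)] z = z ∧ z.1 0 = x.1 0}) := by
    refine fun w w' hww' => injective_coord_zero_fiber y ?_
    simpa only [hqK] using congrArg (fun z => z.1.1 (K + 1)) hww'
  have hterm (w : {w : MarkovShift A // shift w = y}) :
      Real.exp (f w) ≤ b ⟨q w, hq w, hq₀ w⟩ :=
    (Real.exp_le_exp.2 (hqf w)).trans_eq (Real.exp_add _ _)
  calc transfer f 1 y
    _ ≤ ∑' w : {w : MarkovShift A // shift w = y}, ENNReal.ofReal (b ⟨q w, hq w, hq₀ w⟩) :=
      ENNReal.tsum_le_tsum fun w => by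
        simpa only [Pi.one_apply, mul_one] using ENNReal.ofReal_le_ofReal (hterm w)
    _ ≤ ∑' z, ENNReal.ofReal (b z) :=
      ENNReal.tsum_comp_le_tsum_of_injective hinj fun z => ENNReal.ofReal (b z)
    _ = ENNReal.ofReal (∑' z, b z) :=
      (ENNReal.ofReal_tsum_of_nonneg (fun z => by positivity) (hsum.mul_left _)).symm
    _ ≤ ENNReal.ofReal (Real.exp (∑' z, b z)) := by
      gcongr
      linarith [Real.add_one_le_exp (∑' z, b z)]

theorem transfer_const_mul_one_le {f : MarkovShift A → ℝ} {D : ℝ} {x : MarkovShift A}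
    (hD : transfer f 1 x ≤ ENNReal.ofReal (Real.exp D)) {β : ℝ} (hβ : 1 ≤ β) :
    transfer (fun x => β * f x) 1 x ≤ ENNReal.ofReal (Real.exp (β * D)) := by
  have hpow (s : ℝ) : ENNReal.ofReal (Real.exp (β * s)) = ENNReal.ofReal (Real.exp s) ^ β := by
    rw [ENNReal.ofReal_rpow_of_pos (Real.exp_pos s), ← Real.exp_mul, mul_comm]
  rw [hpow]
  calc transfer (fun x => β * f x) 1 x
    _ ≤ transfer f 1 x ^ β := by
      simpa only [transfer, Pi.one_apply, mul_one, hpow] using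
        ennreal_tsum_rpow_le_rpow_tsum _ hβ
    _ ≤ ENNReal.ofReal (Real.exp D) ^ β := by gcongr

theorem FinitelyPrimitive.exists_transfer_const_mul_one_le (hA : FinitelyPrimitive A)
    {f : MarkovShift A → ℝ} (hf : SatisfiesWalters f) (hV : Var1Finite f) {p : ℝ}
    (hp : HasGurevichPressure f p) : ∃ D : ℝ, ∀ β, 1 ≤ β → ∀ x,
      transfer (fun x => β * f x) 1 x ≤ ENNReal.ofReal (Real.exp (β * D)) := by
  rcases isEmpty_or_nonempty (MarkovShift A) with _ | ⟨⟨x⟩⟩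
  · exact ⟨0, fun _ _ x => isEmptyElim x⟩
  · obtain ⟨K, C, hC⟩ := hA.exists_boundedConnection hV
    obtain ⟨D, hD⟩ := hC.exists_transfer_one_le hf x
      ((hp _ (admissible_coord x 0)).1 _ (by omega))
    exact ⟨D, fun β hβ x => transfer_const_mul_one_le (hD x) hβ⟩

/-! ### The functions `V_β = β⁻¹ log h_β` -/

theorem IsRPF.abs_log_sub_le {f h : MarkovShift A → ℝ} {β p D : ℝ} {ν : Measure (MarkovShift A)}
    (hR : IsRPF (fun x => β * f x) p h ν) (hA : FinitelyPrimitive A) (hf : SatisfiesWalters f)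
    (hβ : 0 < β)
    (hD : ∀ x, transfer (fun x => β * f x) 1 x ≤ ENNReal.ofReal (Real.exp (β * D))) {m : ℕ}
    (hm : 1 ≤ m) {x y : MarkovShift A} (hxy : x ∈ cylOf y m) :
    |(1 / β) * Real.log (h x) - (1 / β) * Real.log (h y)| ≤ waltersSup f m := by
  have hle {x y : MarkovShift A} (hxy : x ∈ cylOf y m) :
      h x ≤ Real.exp (β * waltersSup f m) * h y := by
    rw [← waltersSup_const_mul hβ.le]
    exact hR.eigenfunction_le hA (hf.const_mul hβ.le) ENNReal.ofReal_ne_top hD hm hxy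
  exact abs_inv_mul_log_sub_le hβ (hR.2.1 x) (hR.2.1 y) (hle hxy) (hle (mem_cylOf_comm.1 hxy))

theorem IsRPF.abs_log_le {f h : MarkovShift A → ℝ} {β p D : ℝ} {ν : Measure (MarkovShift A)}
    (hR : IsRPF (fun x => β * f x) p h ν) (hA : FinitelyPrimitive A) (hf : SatisfiesWalters f)
    (hβ : 0 < β)
    (hD : ∀ x, transfer (fun x => β * f x) 1 x ≤ ENNReal.ofReal (Real.exp (β * D)))
    {K : ℕ} {C : ℝ} (hC : BoundedConnection f K C) (x : MarkovShift A) :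
    |(1 / β) * Real.log (h x)| ≤ C + waltersSup f 1 + K * D := by
  have hosc (x y : MarkovShift A) :
      h x ≤ Real.exp (β * (C + waltersSup f 1 + K * D)) * h y := by
    have := hR.eigenfunction_le_of_boundedConnection hA (hf.const_mul hβ.le) hD
      (hC.const_mul hβ.le) x y
    rwa [waltersSup_const_mul hβ.le, mul_left_comm (K : ℝ), ← mul_add, ← mul_add] at this
  have hprob : IsProbabilityMeasure ν := hR.2.2.2.1
  have hint : ∫ x, h x ∂ν = 1 := hR.2.2.2.2.2
  obtain ⟨y, hy⟩ := exists_le_integral hR.integrable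
  obtain ⟨z, hz⟩ := exists_integral_le hR.integrable
  rw [hint] at hy hz
  have hupper : h x ≤ Real.exp (β * (C + waltersSup f 1 + K * D)) * 1 :=
    (hosc x y).trans (by gcongr)
  simpa only [Real.log_one, mul_zero, sub_zero] using
    abs_inv_mul_log_sub_le hβ (hR.2.1 x) one_pos hupper (hz.trans (hosc z x))

theorem equicontinuous_of_abs_sub_le_on_cylOf {ι : Type*} {F : ι → MarkovShift A → ℝ} {w : ℕ → ℝ}
    (hw : Tendsto w atTop (𝓝 0))
    (hF : ∀ i m, 1 ≤ m → ∀ x y, x ∈ cylOf y m → |F i x - F i y| ≤ w m) : Equicontinuous F := by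
  refine fun x => Metric.equicontinuousAt_iff_right.2 fun ε hε => ?_
  obtain ⟨m, hmε, hm⟩ := ((hw.eventually_lt_const hε).and (eventually_ge_atTop 1)).exists
  filter_upwards [cylOf_mem_nhds x m] with y hy i
  exact (hF i m hm x y (mem_cylOf_comm.1 hy)).trans_lt hmε

end

/-- The family `V_β = (1/β) log h_β`, `β ≥ 1`, is uniformly bounded and equicontinuous;
in particular some sequence `V_{β_i}` with `β_i → ∞` converges uniformly on every
compact subset. -/
theorem log_eigenfunctions_equicontinuous
    (A : ℕ → ℕ → Bool) (r : ℝ) (hr0 : 0 < r) (hr1 : r < 1)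
    (hmix : TopologicallyMixing A)
    (hbip : FinitelyPrimitive A)
    (f : MarkovShift A → ℝ)
    (hWalters : SatisfiesWalters f)
    (hVar1 : Var1Finite f)
    (P : ℝ → ℝ)
    (hPfin : HasGurevichPressure f (P 1))
    (h : ℝ → MarkovShift A → ℝ)
    (ν : ℝ → Measure (MarkovShift A))
    (hRPF : ∀ β : ℝ, 1 ≤ β → IsRPF (fun x => β * f x) (P β) (h β) (ν β)) :
    (∃ C : ℝ, ∀ β : ℝ, 1 ≤ β → ∀ x : MarkovShift A,
        |(1 / β) * Real.log (h β x)| ≤ C) ∧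
      (∀ ε : ℝ, 0 < ε → ∃ δ : ℝ, 0 < δ ∧ ∀ β : ℝ, 1 ≤ β → ∀ x y : MarkovShift A,
        dist' r x y < δ →
          |(1 / β) * Real.log (h β x) - (1 / β) * Real.log (h β y)| < ε) ∧
      (∃ (βs : ℕ → ℝ) (V : MarkovShift A → ℝ), (∀ i, 1 ≤ βs i) ∧
        Tendsto βs atTop atTop ∧
        ∀ K : Set (MarkovShift A), IsCompact K →
          TendstoUniformlyOn (fun i x => (1 / βs i) * Real.log (h (βs i) x)) V atTop K) := by
  obtain ⟨K, C, hC⟩ := hbip.exists_boundedConnection hVar1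
  obtain ⟨D, hD⟩ := hbip.exists_transfer_const_mul_one_le hWalters hVar1 hPfin
  have hbound (β : ℝ) (hβ : 1 ≤ β) (x : MarkovShift A) :=
    (hRPF β hβ).abs_log_le hbip hWalters (one_pos.trans_le hβ) (hD β hβ) hC x
  have hmod (β : ℝ) (hβ : 1 ≤ β) (m : ℕ) (hm : 1 ≤ m) (x y : MarkovShift A)
      (hxy : x ∈ cylOf y m) :=
    (hRPF β hβ).abs_log_sub_le hbip hWalters (one_pos.trans_le hβ) (hD β hβ) hm hxy
  refine ⟨⟨_, hbound⟩, fun ε hε => ?_, ?_⟩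
  · obtain ⟨m, hmε, hm⟩ :=
      ((hWalters.2.eventually_lt_const hε).and (eventually_ge_atTop 1)).exists
    exact ⟨r ^ m, pow_pos hr0 m, fun β hβ x y hxy =>
      (hmod β hβ m hm x y (mem_cylOf_of_dist'_lt hr0 hr1 hxy)).trans_lt hmε⟩
  · have hβ (i : ℕ) : (1 : ℝ) ≤ i + 1 := le_add_of_nonneg_left i.cast_nonneg
    obtain ⟨φ, V, hφ, hV⟩ := exists_subseq_tendstoUniformlyOn_isCompact
      (equicontinuous_of_abs_sub_le_on_cylOf hWalters.2 fun i => hmod (i + 1) (hβ i))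
      (fun _ => isCompact_Icc) fun i x => abs_le.1 (hbound (i + 1) (hβ i) x)
    exact ⟨fun i => φ i + 1, V, fun i => hβ (φ i), tendsto_atTop_add_const_right _ 1
      (tendsto_natCast_atTop_atTop.comp hφ.tendsto_atTop), hV⟩

end MarkovShift
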